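/- Let P_12 denote the path with 12 edges. Painter has a winning strategy in the deterministic P_12-avoidance game with 2 colors and tree size restriction 78; consequently k*(P_12,2) ≥ 79. A winning strategy for Painter is: color an edge blue if and only if it is adjacent to a red edge and coloring it blue does not complete a blue copy of P_12, and otherwise color it red. -/

import Mathlib

open SimpleGraph Filter Asymptotics
open scoped Classical

/-- A history of the game: the sequence of edges presented so far, together with
the colors (elements of `Fin r`, representing the colors `1,…,r`) they received. -/
abbrev EdgeHistory (V : Type) (r : ℕ) := List (Sym2 V × Fin r)

/-- A Painter strategy on vertex type `V` with `r` colors: a function assigning a color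
to every pair (history, new edge). -/
abbrev PainterStrategy (V : Type) (r : ℕ) := EdgeHistory V r → Sym2 V → Fin r

/-- Auxiliary function: run a Painter strategy on a list of presented edges,
extending the given history. -/
def runPainterAux {V : Type} {r : ℕ} (π : PainterStrategy V r) :
    EdgeHistory V r → List (Sym2 V) → EdgeHistory V r
  | h, [] => h
  | h, e :: es => runPainterAux π (h ++ [(e, π h e)]) es

/-- The colored history obtained by coloring the edges of `l` successively
according to the Painter strategy `π`. -/
def runPainter {V : Type} {r : ℕ} (π : PainterStrategy V r) (l : List (Sym2 V)) :
    EdgeHistory V r :=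
  runPainterAux π [] l

/-- `G` contains a copy of `F`, i.e. a subgraph isomorphic to `F`. -/
def IsCopy {α β : Type} (F : SimpleGraph α) (G : SimpleGraph β) : Prop :=
  ∃ f : α ↪ β, ∀ u v : α, F.Adj u v → G.Adj (f u) (f v)

/-- The graph formed by the edges of color `c` in the history `h`. -/
def colorGraph {V : Type} {r : ℕ} (h : EdgeHistory V r) (c : Fin r) : SimpleGraph V :=
  SimpleGraph.fromEdgeSet {e | (e, c) ∈ h}

/-- The history `h` contains a monochromatic copy of `F`. -/
def HasMonoCopy {α V : Type} {r : ℕ} (F : SimpleGraph α) (h : EdgeHistory V r) : Prop :=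
  ∃ c : Fin r, IsCopy F (colorGraph h c)

/-- The number of edges of `G` lying entirely within the vertex set `S`. -/
noncomputable def edgesWithin {V : Type} (G : SimpleGraph V) (S : Set V) : ℕ :=
  (G.edgeSet ∩ {e | ∀ v ∈ e, v ∈ S}).ncard

/-- `m(G) ≤ d`: every subgraph `H` of `G` with at least one vertex satisfies `e_H ≤ d · v_H`. -/
def DensityLE {V : Type} (G : SimpleGraph V) (d : ℝ) : Prop :=
  ∀ S : Finset V, S.Nonempty → (edgesWithin G (↑S : Set V) : ℝ) ≤ d * (S.card : ℝ)

/-- `G` contains no cycle and every connected component of `G` has at most `k` edges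
(equivalently, `G` is acyclic and contains no connected subgraph with more than `k` edges). -/
def TreeSizeLE {V : Type} (G : SimpleGraph V) (k : ℕ) : Prop :=
  G.IsAcyclic ∧ ∀ S : Set V, (G.induce S).Connected → edgesWithin G S ≤ k

/-- A legal sequence of moves for Builder: distinct non-loop edges. -/
def ValidEdgeSeq {V : Type} (l : List (Sym2 V)) : Prop :=
  l.Nodup ∧ ∀ e ∈ l, ¬ e.IsDiag

/-- The (uncolored) board formed by a list of edges. -/
def boardOf {V : Type} (l : List (Sym2 V)) : SimpleGraph V :=
  SimpleGraph.fromEdgeSet {e | e ∈ l}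

/-- Builder has a winning strategy in the deterministic `F`-avoidance game with `r` colors
and density restriction `d`. -/
def BuilderWinsDensity {α : Type} (F : SimpleGraph α) (r : ℕ) (d : ℝ) : Prop :=
  ∃ a : ℕ, ∀ π : PainterStrategy (Fin a) r, ∃ l : List (Sym2 (Fin a)),
    ValidEdgeSeq l ∧ (∀ i : ℕ, DensityLE (boardOf (l.take i)) d) ∧
    HasMonoCopy F (runPainter π l)

/-- Builder has a winning strategy in the deterministic `F`-avoidance game with `r` colors
and tree size restriction `k`. -/
def BuilderWinsTree {α : Type} (F : SimpleGraph α) (r k : ℕ) : Prop :=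
  ∃ a : ℕ, ∀ π : PainterStrategy (Fin a) r, ∃ l : List (Sym2 (Fin a)),
    ValidEdgeSeq l ∧ (∀ i : ℕ, TreeSizeLE (boardOf (l.take i)) k) ∧
    HasMonoCopy F (runPainter π l)

/-- The Painter strategy `π` on `a` vertices never creates a monochromatic copy of `F`
against any Builder play obeying the tree size restriction `k`. -/
def PainterAvoidsTree {α : Type} (F : SimpleGraph α) (r k a : ℕ)
    (π : PainterStrategy (Fin a) r) : Prop :=
  ∀ l : List (Sym2 (Fin a)), ValidEdgeSeq l →
    (∀ i : ℕ, TreeSizeLE (boardOf (l.take i)) k) →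
    ¬ HasMonoCopy F (runPainter π l)

/-- Painter has a winning strategy in the deterministic `F`-avoidance game with `r` colors
and tree size restriction `k`. -/
def PainterWinsTree {α : Type} (F : SimpleGraph α) (r k : ℕ) : Prop :=
  ∀ a : ℕ, ∃ π : PainterStrategy (Fin a) r, PainterAvoidsTree F r k a π

/-- A sequence of `N` distinct non-loop edges on `n` vertices. -/
def ValidSeqFun {n N : ℕ} (f : Fin N → Sym2 (Fin n)) : Prop :=
  Function.Injective f ∧ ∀ i, ¬ (f i).IsDiag

/-- The probability (with respect to the uniformly random order in which the `N` distinct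
edges of the random process on `n` vertices appear) of the event `P`. -/
noncomputable def onlineProb (n N : ℕ) (P : (Fin N → Sym2 (Fin n)) → Prop) : ℝ :=
  (Set.ncard {f : Fin N → Sym2 (Fin n) | ValidSeqFun f ∧ P f} : ℝ) /
  (Set.ncard {f : Fin N → Sym2 (Fin n) | ValidSeqFun f} : ℝ)

/-- Event: playing the online strategy `π` on the random edge sequence `f` produces
a monochromatic copy of `F`. -/
def OnlineMonoCopy {α : Type} (F : SimpleGraph α) {r n N : ℕ}
    (π : PainterStrategy (Fin n) r) (f : Fin N → Sym2 (Fin n)) : Prop :=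
  HasMonoCopy F (runPainter π (List.ofFn f))

/-- The Painter strategy (colors: `0` = red, `1` = blue): color an edge blue if and only if
it is adjacent to a red edge and coloring it blue does not complete a blue copy of the path
`P_ℓ` with `ℓ` edges; otherwise color it red. -/
noncomputable def blueIfSafeStrategy (ℓ n : ℕ) : PainterStrategy (Fin n) 2 := fun h e =>
  if (∃ e', (e', (0 : Fin 2)) ∈ h ∧ ∃ v, v ∈ e ∧ v ∈ e') ∧
      ¬ IsCopy (SimpleGraph.pathGraph (ℓ + 1))
        (SimpleGraph.fromEdgeSet (insert e {e' | (e', (1 : Fin 2)) ∈ h}))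
  then 1 else 0

theorem arith_step (S : ℕ → ℕ) (b : ℕ → Prop)
  (h1 : ∀ i < 12, b i → S i + 16 ≤ S (i+2))
  (h2 : ∀ i < 11, b i → b (i+1) → S i + 17 ≤ S (i+3))
  (h3 : ∀ i < 11, b i ∨ b (i+1)) (m X Y : ℕ) (hm : m < 9)
  (hX : b m → X ≤ S (m+2)) (hY : b (m+1) → Y ≤ S (m+3)) :
  b (m+3) → min (X+17) (Y+16) ≤ S (m+5) := by
  intro hb
  by_cases e1 : b (m+1)
  · have := h1 (m+3) (by omega) hb
    have := hY e1
    simp only [Nat.add_assoc, Nat.reduceAdd] at *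
    omega
  · have e2 : b (m+2) := by
      have := h3 (m+1) (by omega); tauto
    have e0 : b m := by
      have := h3 m (by omega); tauto
    have := h2 (m+2) (by omega) e2 hb
    have := hX e0
    simp only [Nat.add_assoc, Nat.reduceAdd] at *
    omega

theorem arith (c : ℕ → ℕ) (b : ℕ → Prop)
  (h1 : ∀ i < 12, b i → 16 ≤ c i + c (i+1))
  (h2 : ∀ i < 11, b i → b (i+1) → 17 ≤ c i + c (i+1) + c (i+2))
  (h3 : ∀ i < 11, b i ∨ b (i+1)) : 67 ≤ ∑ i ∈ Finset.range 13, c i := by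
  set S : ℕ → ℕ := fun k => ∑ i ∈ Finset.range k, c i with hSd
  have hs : ∀ k, S (k+1) = S k + c k := fun k => Finset.sum_range_succ _ _
  have g1 : ∀ i < 12, b i → S i + 16 ≤ S (i+2) := by
    intro i hi hb
    have := h1 i hi hb; have := hs i; have := hs (i+1)
    simp only [Nat.add_assoc, Nat.reduceAdd] at *; omega
  have g2 : ∀ i < 11, b i → b (i+1) → S i + 17 ≤ S (i+3) := by
    intro i hi hb hb'
    have := h2 i hi hb hb'; have := hs i; have := hs (i+1); have := hs (i+2)
    simp only [Nat.add_assoc, Nat.reduceAdd] at *; omega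
  have st := arith_step S b g1 g2 h3
  have x2 : b 0 → 16 ≤ S 2 := fun h => by have := g1 0 (by omega) h; simp only [Nat.zero_add] at this; omega
  have x3 : b 1 → 16 ≤ S 3 := fun h => by have := g1 1 (by omega) h; simp only [Nat.reduceAdd] at this; omega
  have x4 : b 2 → 17 ≤ S 4 := fun h => by
    by_cases e : b 1
    · have := g2 1 (by omega) e h; simp only [Nat.reduceAdd] at this; omega
    · have e0 : b 0 := by have := h3 0 (by omega); tauto
      have := g1 2 (by omega) h; have := x2 e0; simp only [Nat.reduceAdd] at *; omega
  have x5 := st 0 _ _ (by omega) x2 x3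
  have x6 := st 1 _ _ (by omega) x3 x4
  have x7 := st 2 _ _ (by omega) x4 x5
  have x8 := st 3 _ _ (by omega) x5 x6
  have x9 := st 4 _ _ (by omega) x6 x7
  have x10 := st 5 _ _ (by omega) x7 x8
  have x11 := st 6 _ _ (by omega) x8 x9
  have x12 := st 7 _ _ (by omega) x9 x10
  have x13 := st 8 _ _ (by omega) x10 x11
  norm_num at x12 x13
  change 67 ≤ S 13
  rcases h3 10 (by omega) with h | h
  · have : S 13 = S 12 + c 12 := hs 12
    have := x12 h; omega
  · have := x13 h; omega


def BP {V : Type} (B : SimpleGraph V) (x : V) (d : ℕ) (g : ℕ → V) : Prop :=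
  g 0 = x ∧ (∀ s ≤ d, ∀ t ≤ d, g s = g t → s = t) ∧ ∀ t < d, B.Adj (g t) (g (t+1))

theorem BP.reach {V : Type} {B : SimpleGraph V} {x : V} {d : ℕ} {g : ℕ → V} (h : BP B x d g) :
    ∀ t ≤ d, B.Reachable x (g t) := by
  intro t ht
  induction t with
  | zero => rw [h.1]
  | succ t ih => exact (ih (by omega)).trans (h.2.2 t (by omega)).reachable

/-- edges hanging at x -/
def HE {V : Type} (G' : SimpleGraph V) (x : V) : Set (Sym2 V) :=
  {e | e ∈ G'.edgeSet ∧ ∃ y ∈ e, G'.Reachable x y}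

/-- counting lemma -/
theorem count_lemma {V : Type} [Finite V] {G' B R : SimpleGraph V} (hBG : B ≤ G')
    (hdis : ∀ e, e ∈ B.edgeSet → e ∈ R.edgeSet → False)
    (hchord : ∀ u w, R.Adj u w → ¬ B.Reachable u w)
    {x : V} {d : ℕ} {g : ℕ → V} (h : BP B x d g) (o m : ℕ) (hm : o + 2 * m ≤ d + 1)
    (hr : ∀ t < m, ∃ e ∈ R.edgeSet, e ∈ G'.edgeSet ∧ (g (o+2*t) ∈ e ∨ g (o+2*t+1) ∈ e)) :
    d + m ≤ (HE G' x).ncard := by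
  have hreach := h.reach
  have hr' : ∀ t, ∃ e, t < m → ∃ s, (s = o+2*t ∨ s = o+2*t+1) ∧ e ∈ R.edgeSet ∧ e ∈ G'.edgeSet ∧ g s ∈ e := by
    intro t
    by_cases ht : t < m
    · obtain ⟨e, h1, h2, h3 | h3⟩ := hr t ht
      · exact ⟨e, fun _ => ⟨_, Or.inl rfl, h1, h2, h3⟩⟩
      · exact ⟨e, fun _ => ⟨_, Or.inr rfl, h1, h2, h3⟩⟩
    · exact ⟨s(x, x), fun h => absurd h ht⟩
  choose ρ hρ using hr'
  have hb : ∀ t < d, s(g t, g (t+1)) ∈ B.edgeSet := fun t ht => h.2.2 t ht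
  let F1 := (Finset.range d).image (fun t => s(g t, g (t+1)))
  let F2 := (Finset.range m).image ρ
  have c1 : F1.card = d := by
    rw [Finset.card_image_of_injOn, Finset.card_range]
    intro a ha c hc hac
    simp only [Finset.coe_range, Set.mem_Iio] at ha hc
    simp only [Sym2.eq_iff] at hac
    rcases hac with ⟨h1, _⟩ | ⟨h1, h2⟩
    · exact h.2.1 _ (by omega) _ (by omega) h1
    · have := h.2.1 _ (by omega) _ (by omega) h1
      have := h.2.1 _ (by omega) _ (by omega) h2
      omega
  have c2 : F2.card = m := by
    rw [Finset.card_image_of_injOn, Finset.card_range]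
    intro a ha c hc hac
    simp only [Finset.coe_range, Set.mem_Iio] at ha hc
    obtain ⟨s, hs, r1, r2, r3⟩ := hρ a ha
    obtain ⟨s', hs', r1', r2', r3'⟩ := hρ c hc
    have hac : ρ a = ρ c := hac
    rw [← hac] at r3'
    by_contra hne
    have hss : g s ≠ g s' := by
      intro he
      have := h.2.1 _ (by omega) _ (by omega) he
      omega
    have he : ρ a = s(g s, g s') := ((Sym2.mem_and_mem_iff hss).1 ⟨r3, r3'⟩)
    rw [he] at r1
    exact hchord _ _ r1 ((hreach s (by omega)).symm.trans (hreach s' (by omega)))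
  have hd : Disjoint F1 F2 := by
    rw [Finset.disjoint_left]
    intro e he1 he2
    simp only [F1, F2, Finset.mem_image, Finset.mem_range] at he1 he2
    obtain ⟨t, ht, rfl⟩ := he1
    obtain ⟨s, hs, hse⟩ := he2
    obtain ⟨_, _, r1, _⟩ := hρ s hs
    exact hdis _ (hb t ht) (hse ▸ r1)
  have hsub : (↑(F1 ∪ F2) : Set (Sym2 V)) ⊆ HE G' x := by
    intro e he
    simp only [F1, F2, Finset.coe_union, Finset.coe_image, Finset.coe_range, Set.mem_union, Set.mem_image, Set.mem_Iio] at he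
    rcases he with ⟨t, ht, rfl⟩ | ⟨t, ht, rfl⟩
    · exact ⟨edgeSet_mono hBG (hb t ht), g t, by simp, (hreach t (by omega)).mono hBG⟩
    · obtain ⟨s, hs, r1, r2, r3⟩ := hρ t ht
      exact ⟨r2, g s, r3, (hreach s (by omega)).mono hBG⟩
  have := Set.ncard_le_ncard hsub (Set.toFinite _)
  rw [Set.ncard_coe_finset, Finset.card_union_of_disjoint hd, c1, c2] at this
  exact this

theorem core {V : Type} [Finite V] (G R B : SimpleGraph V) (τ : Sym2 V → ℕ)
    (hG : G.IsAcyclic) (hRG : R ≤ G) (hBG : B ≤ G)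
    (hdis : ∀ e, e ∈ B.edgeSet → e ∈ R.edgeSet → False)
    (hτ : ∀ e ∈ R.edgeSet, ∀ e' ∈ R.edgeSet, τ e = τ e' → e = e')
    (hblue : ∀ e ∈ B.edgeSet, ∃ e' ∈ R.edgeSet, τ e' < τ e ∧ ∃ x, x ∈ e ∧ x ∈ e')
    (hred : ∀ e ∈ R.edgeSet,
      (∀ e' ∈ R.edgeSet, (∃ x, x ∈ e ∧ x ∈ e') → ¬ τ e' < τ e) ∨
      ∃ u w p q g g', e = s(u, w) ∧ p + q = 11 ∧ BP B u p g ∧ BP B w q g' ∧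
        (∀ t < p, τ s(g t, g (t+1)) < τ e) ∧ (∀ t < q, τ s(g' t, g' (t+1)) < τ e))
    (v : ℕ → V) (hv : ∀ i ≤ 12, ∀ j ≤ 12, v i = v j → i = j)
    (hvr : ∀ i < 12, R.Adj (v i) (v (i+1))) :
    ∃ S : Set V, (G.induce S).Connected ∧ 79 ≤ edgesWithin G S := by
  -- bridges
  have hbr : ∀ u w, G.Adj u w → ¬ (G.deleteEdges {s(u, w)}).Reachable u w := by
    intro u w h
    exact isBridge_iff.1 (isAcyclic_iff_forall_adj_isBridge.1 hG h)
  let D : Finset (Sym2 V) := (Finset.range 12).image (fun i => s(v i, v (i+1)))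
  have hDmem : ∀ e, e ∈ D ↔ ∃ i < 12, s(v i, v (i+1)) = e := by
    intro e; simp [D]
  have hDR : ∀ e ∈ D, e ∈ R.edgeSet := by
    intro e he
    obtain ⟨i, hi, rfl⟩ := (hDmem e).1 he
    exact hvr i hi
  have hinj : ∀ i < 12, ∀ j < 12, s(v i, v (i+1)) = s(v j, v (j+1)) → i = j := by
    intro a ha c hc hac
    simp only [Sym2.eq_iff] at hac
    rcases hac with ⟨h1, _⟩ | ⟨h1, h2⟩
    · exact hv _ (by omega) _ (by omega) h1
    · have := hv _ (by omega) _ (by omega) h1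
      have := hv _ (by omega) _ (by omega) h2
      omega
  have cD : D.card = 12 := by
    rw [Finset.card_image_of_injOn, Finset.card_range]
    intro a ha c hc hac
    simp only [Finset.coe_range, Set.mem_Iio] at ha hc
    exact hinj a ha c hc hac
  let G' := G.deleteEdges (↑D : Set (Sym2 V))
  have hG'G : G' ≤ G := deleteEdges_le _
  have hG'e : ∀ e, e ∈ G'.edgeSet ↔ e ∈ G.edgeSet ∧ e ∉ D := by
    intro e; simp [G', edgeSet_deleteEdges]
  have hBG' : B ≤ G' := by
    intro a c hac
    have : s(a, c) ∈ G'.edgeSet := (hG'e _).2 ⟨hBG hac, fun h => hdis _ hac (hDR _ h)⟩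
    exact this
  have hchord : ∀ u w, R.Adj u w → ¬ B.Reachable u w := by
    intro u w h hr
    refine hbr u w (hRG h) (hr.mono ?_)
    intro a c hac
    rw [deleteEdges_adj]
    refine ⟨hBG hac, fun he => hdis s(a, c) hac ?_⟩
    rw [Set.mem_singleton_iff] at he
    rw [he]; exact h
  -- distinct path vertices are not G'-reachable
  have hlt : ∀ i j, i < j → j ≤ 12 → ¬ G'.Reachable (v i) (v j) := by
    intro i j hij hj hr
    refine hbr _ _ (hRG (hvr i (by omega))) ?_
    have hle : G' ≤ G.deleteEdges {s(v i, v (i+1))} := by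
      apply deleteEdges_anti
      intro e he
      rw [Set.mem_singleton_iff] at he
      exact (hDmem e).2 ⟨i, by omega, he.symm⟩
    have hk : ∀ k, i + 1 + k ≤ 12 → (G.deleteEdges {s(v i, v (i+1))}).Reachable (v (i+1)) (v (i+1+k)) := by
      intro k
      induction k with
      | zero => intro _; rfl
      | succ k ih =>
        intro hk
        refine (ih (by omega)).trans (Adj.reachable ?_)
        rw [deleteEdges_adj]
        refine ⟨hRG (hvr (i+1+k) (by omega)), fun he => ?_⟩
        rw [Set.mem_singleton_iff] at he
        have := hinj _ (by omega) _ (by omega) he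
        omega
    have h2 := hk (j - (i+1)) (by omega)
    rw [show i + 1 + (j - (i+1)) = j by omega] at h2
    exact (hr.mono hle).trans h2.symm
  have hne : ∀ i ≤ 12, ∀ j ≤ 12, G'.Reachable (v i) (v j) → i = j := by
    intro i hi j hj hr
    rcases lt_trichotomy i j with h | h | h
    · exact absurd hr (hlt i j h hj)
    · exact h
    · exact absurd hr.symm (hlt j i h hi)
  let c : ℕ → ℕ := fun i => (HE G' (v i)).ncard
  -- red edge touching a hanging vertex
  have htouch : ∀ i ≤ 12, ∀ y e, e ∈ R.edgeSet → y ∈ e → G'.Reachable (v i) y →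
      (y = v i → e ∉ D) → e ∈ G'.edgeSet := by
    intro i hi y e heR hye hr hy
    refine (hG'e e).2 ⟨edgeSet_mono hRG heR, fun heD => ?_⟩
    obtain ⟨j, hj, rfl⟩ := (hDmem e).1 heD
    rw [Sym2.mem_iff] at hye
    rcases hye with h | h
    · have := hne i hi j (by omega) (h ▸ hr)
      exact hy (by rw [h, this]) heD
    · have := hne i hi (j+1) (by omega) (h ▸ hr)
      exact hy (by rw [h, this]) heD
  have cost1 : ∀ i ≤ 12, ∀ d g, BP B (v i) d g → d + d / 2 ≤ c i := by
    intro i hi d g h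
    refine count_lemma hBG' hdis hchord h 1 (d/2) (by omega) ?_
    intro t ht
    obtain ⟨e', h1, h2, x, hx, hx'⟩ := hblue s(g (1+2*t), g (1+2*t+1)) (h.2.2 (1+2*t) (by omega))
    rw [Sym2.mem_iff] at hx
    have hs : ∃ s, (s = 1+2*t ∨ s = 1+2*t+1) ∧ x = g s := by
      rcases hx with h | h
      · exact ⟨_, Or.inl rfl, h⟩
      · exact ⟨_, Or.inr rfl, h⟩
    obtain ⟨s, hs, hxs⟩ := hs
    refine ⟨e', h1, htouch i hi x e' h1 hx' ?_ ?_, ?_⟩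
    · rw [hxs]; exact (h.reach s (by omega)).mono hBG'
    · intro hxv
      rw [← h.1, hxs] at hxv
      have := h.2.1 _ (by omega) _ (by omega) hxv
      omega
    · rcases hx with h | h
      · left; rw [← h]; exact hx'
      · right; rw [← h]; exact hx'
  have cost2 : ∀ i ≤ 12, ∀ T g, BP B (v i) 11 g → (∀ t < 11, τ s(g t, g (t+1)) < T) →
      (∀ e ∈ D, v i ∈ e → T ≤ τ e) → 17 ≤ c i := by
    intro i hi T g h hT hD
    refine count_lemma hBG' hdis hchord h 0 6 (by omega) ?_
    intro t ht
    obtain ⟨e', h1, h2, x, hx, hx'⟩ := hblue s(g (0+2*t), g (0+2*t+1)) (h.2.2 (0+2*t) (by omega))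
    rw [Sym2.mem_iff] at hx
    refine ⟨e', h1, htouch i hi x e' h1 hx' ?_ ?_, ?_⟩
    · rcases hx with hx | hx
      · rw [hx]; exact (h.reach _ (by omega)).mono hBG'
      · rw [hx]; exact (h.reach _ (by omega)).mono hBG'
    · intro hxv heD
      have := hD e' heD (hxv ▸ hx')
      have := hT (0+2*t) (by omega)
      omega
    · rcases hx with h | h
      · left; rw [← h]; exact hx'
      · right; rw [← h]; exact hx'
  let b : ℕ → Prop := fun i => ∃ p q g g', p + q = 11 ∧ BP B (v i) p g ∧ BP B (v (i+1)) q g' ∧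
        (∀ t < p, τ s(g t, g (t+1)) < τ s(v i, v (i+1))) ∧
        (∀ t < q, τ s(g' t, g' (t+1)) < τ s(v i, v (i+1)))
  have hbtype : ∀ i < 12, (∃ e' ∈ R.edgeSet, (∃ x, x ∈ s(v i, v (i+1)) ∧ x ∈ e') ∧
      τ e' < τ s(v i, v (i+1))) → b i := by
    rintro i hi ⟨e', h1, h2, h3⟩
    rcases hred s(v i, v (i+1)) (hvr i hi) with h | ⟨u, w, p, q, g, g', he, hpq, hg, hg', ht, ht'⟩
    · exact absurd h3 (h e' h1 h2)
    · rw [Sym2.eq_iff] at he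
      rcases he with ⟨h4, h5⟩ | ⟨h4, h5⟩
      · exact ⟨p, q, g, g', hpq, h4 ▸ hg, h5 ▸ hg', ht, ht'⟩
      · exact ⟨q, p, g', g, by omega, h4 ▸ hg', h5 ▸ hg, ht', ht⟩
  have key : 67 ≤ ∑ i ∈ Finset.range 13, c i := by
    apply arith c b
    · rintro i hi ⟨p, q, g, g', hpq, hg, hg', -, -⟩
      have := cost1 i (by omega) _ _ hg
      have := cost1 (i+1) (by omega) _ _ hg'
      omega
    · rintro i hi ⟨p, q, g, g', hpq, hg, hg', ht, ht'⟩ ⟨p2, q2, g2, g2', hpq2, hg2, hg2', ht2, ht2'⟩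
      have := cost1 i (by omega) _ _ hg
      have := cost1 (i+1) (by omega) _ _ hg'
      have := cost1 (i+1) (by omega) _ _ hg2
      have := cost1 (i+2) (by omega) _ _ hg2'
      by_cases h0 : p = 0 ∧ q2 = 0
      · obtain ⟨rfl, rfl⟩ := h0
        obtain rfl : q = 11 := by omega
        obtain rfl : p2 = 11 := by omega
        have hDi : ∀ T, T ≤ τ s(v i, v (i+1)) → T ≤ τ s(v (i+1), v (i+1+1)) →
            ∀ e ∈ D, v (i+1) ∈ e → T ≤ τ e := by
          intro T hT1 hT2 e he hve
          obtain ⟨j, hj, rfl⟩ := (hDmem e).1 he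
          rw [Sym2.mem_iff] at hve
          rcases hve with h | h
          · have := hv _ (by omega) _ (by omega) h
            rw [← this]; exact hT2
          · have := hv _ (by omega) _ (by omega) h
            obtain rfl : i = j := by omega
            exact hT1
        have : 17 ≤ c (i+1) := by
          rcases le_total (τ s(v i, v (i+1))) (τ s(v (i+1), v (i+1+1))) with h | h
          · exact cost2 (i+1) (by omega) _ _ hg' ht' (hDi _ le_rfl h)
          · exact cost2 (i+1) (by omega) _ _ hg2 ht2 (hDi _ h le_rfl)
        omega
      · omega
    · intro i hi
      rcases lt_trichotomy (τ s(v i, v (i+1))) (τ s(v (i+1), v (i+1+1))) with h | h | h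
      · right
        exact hbtype (i+1) (by omega) ⟨_, hvr i (by omega), ⟨v (i+1), by simp, by simp⟩, h⟩
      · have := hinj _ (by omega) _ (by omega) (hτ _ (hvr i (by omega)) _ (hvr (i+1) (by omega)) h)
        omega
      · left
        exact hbtype i (by omega) ⟨_, hvr (i+1) (by omega), ⟨v (i+1), by simp, by simp⟩, h⟩
  -- conclusion
  refine ⟨(G.connectedComponentMk (v 0)).supp, (G.connectedComponentMk (v 0)).connected_toSimpleGraph, ?_⟩
  have hv0 : ∀ i ≤ 12, G.Reachable (v 0) (v i) := by
    intro i
    induction i with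
    | zero => intro _; rfl
    | succ i ih => intro hi; exact (ih (by omega)).trans (hRG (hvr i (by omega))).reachable
  have hfin : ∀ i, (HE G' (v i)).Finite := fun i => Set.toFinite _
  let U : Finset (Sym2 V) := (Finset.range 13).biUnion (fun i => (hfin i).toFinset)
  have cU : U.card = ∑ i ∈ Finset.range 13, c i := by
    rw [Finset.card_biUnion]
    · refine Finset.sum_congr rfl fun i _ => ?_
      exact (Set.ncard_eq_toFinset_card _ (hfin i)).symm
    · intro i hi j hj hij
      simp only [Finset.coe_range, Set.mem_Iio] at hi hj
      change Disjoint _ _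
      rw [Finset.disjoint_left]
      intro e he1 he2
      rw [Set.Finite.mem_toFinset] at he1 he2
      obtain ⟨h1, y, hy, hr⟩ := he1
      obtain ⟨_, z, hz, hr'⟩ := he2
      have hyz : G'.Reachable y z := by
        by_cases hyz : y = z
        · rw [hyz]
        · rw [(Sym2.mem_and_mem_iff hyz).1 ⟨hy, hz⟩] at h1
          exact Adj.reachable h1
      exact hij (hne i (by omega) j (by omega) ((hr.trans hyz).trans hr'.symm))
  have hDU : Disjoint D U := by
    rw [Finset.disjoint_left]
    intro e he1 he2
    simp only [U, Finset.mem_biUnion, Set.Finite.mem_toFinset] at he2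
    obtain ⟨i, _, h1, _⟩ := he2
    exact ((hG'e e).1 h1).2 he1
  have hall : ∀ e, e ∈ G.edgeSet → ∀ y ∈ e, G.Reachable (v 0) y →
      e ∈ G.edgeSet ∩ {e | ∀ x ∈ e, x ∈ (G.connectedComponentMk (v 0)).supp} := by
    intro e he y hy hr
    refine ⟨he, fun x hx => ?_⟩
    rw [ConnectedComponent.mem_supp_iff, ConnectedComponent.eq]
    by_cases hxy : x = y
    · rw [hxy]; exact hr.symm
    · rw [(Sym2.mem_and_mem_iff hxy).1 ⟨hx, hy⟩] at he
      exact (Adj.reachable he).trans hr.symm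
  have hsub : (↑(D ∪ U) : Set (Sym2 V)) ⊆
      G.edgeSet ∩ {e | ∀ x ∈ e, x ∈ (G.connectedComponentMk (v 0)).supp} := by
    intro e he
    rw [Finset.mem_coe, Finset.mem_union] at he
    rcases he with he | he
    · have hh := edgeSet_mono hRG (hDR e he)
      obtain ⟨i, hi, rfl⟩ := (hDmem e).1 he
      exact hall _ hh (v i) (by simp) (hv0 i (by omega))
    · simp only [U, Finset.mem_biUnion, Set.Finite.mem_toFinset, Finset.mem_range] at he
      obtain ⟨i, hi, h1, y, hy, hr⟩ := he
      exact hall e ((hG'e e).1 h1).1 y hy ((hv0 i (by omega)).trans (hr.mono hG'G))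
  have := Set.ncard_le_ncard hsub (Set.toFinite _)
  rw [Set.ncard_coe_finset, Finset.card_union_of_disjoint hDU, cD, cU] at this
  unfold edgesWithin
  omega

theorem runPainterAux_snoc {V : Type} {r : ℕ} (π : PainterStrategy V r) (l : List (Sym2 V)) (e : Sym2 V) :
    ∀ h, runPainterAux π h (l ++ [e]) =
      runPainterAux π h l ++ [(e, π (runPainterAux π h l) e)] := by
  induction l with
  | nil => intro h; simp [runPainterAux]
  | cons a l ih => intro h; simp only [List.cons_append, runPainterAux]; rw [ih]

theorem runPainter_snoc {V : Type} {r : ℕ} (π : PainterStrategy V r) (l : List (Sym2 V)) (e : Sym2 V) :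
    runPainter π (l ++ [e]) = runPainter π l ++ [(e, π (runPainter π l) e)] :=
  runPainterAux_snoc π l e []

theorem runPainter_fst {V : Type} {r : ℕ} (π : PainterStrategy V r) (l : List (Sym2 V)) :
    (runPainter π l).map Prod.fst = l := by
  induction l using List.reverseRecOn with
  | nil => rfl
  | append_singleton l e ih => rw [runPainter_snoc, List.map_append, ih]; rfl

theorem runPainter_split {V : Type} {r : ℕ} (π : PainterStrategy V r) (l : List (Sym2 V)) :
    ∀ e c, (e, c) ∈ runPainter π l → ∃ l1 l2, l = l1 ++ e :: l2 ∧ c = π (runPainter π l1) e ∧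
      ∀ x ∈ runPainter π l1, x ∈ runPainter π l := by
  induction l using List.reverseRecOn with
  | nil => intro e c h; simp [runPainter, runPainterAux] at h
  | append_singleton l a ih =>
    intro e c h
    rw [runPainter_snoc, List.mem_append] at h
    rw [runPainter_snoc]
    rcases h with h | h
    · obtain ⟨l1, l2, h1, h2, h3⟩ := ih e c h
      refine ⟨l1, l2 ++ [a], by rw [h1]; simp, h2, fun x hx => List.mem_append_left _ (h3 x hx)⟩
    · rw [List.mem_singleton, Prod.mk.injEq] at h
      obtain ⟨rfl, rfl⟩ := h
      exact ⟨l, [], rfl, rfl, fun x hx => List.mem_append_left _ hx⟩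

theorem runPainter_unique {V : Type} {r : ℕ} (π : PainterStrategy V r) (l : List (Sym2 V))
    (hl : l.Nodup) {e c c'} (h : (e, c) ∈ runPainter π l) (h' : (e, c') ∈ runPainter π l) : c = c' := by
  have hn : ((runPainter π l).map Prod.fst).Nodup := by rw [runPainter_fst]; exact hl
  have := List.inj_on_of_nodup_map hn h h' rfl
  exact (Prod.mk.inj this).2

theorem runPainter_mem {V : Type} {r : ℕ} (π : PainterStrategy V r) (l : List (Sym2 V)) (e : Sym2 V) :
    e ∈ l ↔ ∃ c, (e, c) ∈ runPainter π l := by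
  conv_lhs => rw [← runPainter_fst π l]
  simp

theorem isCopy_mono {α β : Type} {F : SimpleGraph α} {G G' : SimpleGraph β} (h : G ≤ G')
    (hc : IsCopy F G) : IsCopy F G' := by
  obtain ⟨f, hf⟩ := hc
  exact ⟨f, fun u v huv => h (hf u v huv)⟩

theorem no_blue {n : ℕ} (l : List (Sym2 (Fin n))) :
    ¬ IsCopy (SimpleGraph.pathGraph 13) (colorGraph (runPainter (blueIfSafeStrategy 12 n) l) 1) := by
  induction l using List.reverseRecOn with
  | nil =>
    rintro ⟨f, hf⟩
    have := hf 0 1 (by rw [pathGraph_adj]; decide)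
    simp [colorGraph, runPainter, runPainterAux] at this
  | append_singleton l e ih =>
    intro hc
    rw [runPainter_snoc] at hc
    by_cases h : blueIfSafeStrategy 12 n (runPainter (blueIfSafeStrategy 12 n) l) e = 1
    · have h' := h
      unfold blueIfSafeStrategy at h'
      split_ifs at h' with hh
      · apply hh.2
        refine isCopy_mono ?_ hc
        apply fromEdgeSet_mono
        intro x hx
        simp only [Set.mem_ofPred_eq, List.mem_append, List.mem_singleton, Prod.mk.injEq] at hx
        rcases hx with hx | hx
        · exact Set.mem_insert_of_mem _ hx
        · rw [hx.1]; exact Set.mem_insert _ _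
      · exact absurd h' (by decide)
    · apply ih
      refine isCopy_mono ?_ hc
      apply fromEdgeSet_mono
      intro x hx
      simp only [Set.mem_ofPred_eq, List.mem_append, List.mem_singleton, Prod.mk.injEq] at hx
      rcases hx with hx | hx
      · exact hx
      · exact absurd hx.2.symm h

theorem copy_nat {V : Type} {G : SimpleGraph V} (h : IsCopy (SimpleGraph.pathGraph 13) G) :
    ∃ v : ℕ → V, (∀ i ≤ 12, ∀ j ≤ 12, v i = v j → i = j) ∧ ∀ i < 12, G.Adj (v i) (v (i+1)) := by
  obtain ⟨f, hf⟩ := h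
  refine ⟨fun i => f (Fin.ofNat 13 i), ?_, ?_⟩
  · intro i hi j hj hij
    have := congrArg Fin.val (f.injective hij)
    simp only [Fin.ofNat] at this
    omega
  · intro i hi
    apply hf
    rw [pathGraph_adj]
    left
    simp only [Fin.ofNat]
    omega

theorem nat_copy {V : Type} {G : SimpleGraph V} (v : ℕ → V)
    (hv : ∀ i ≤ 12, ∀ j ≤ 12, v i = v j → i = j) (ha : ∀ i < 12, G.Adj (v i) (v (i+1))) :
    IsCopy (SimpleGraph.pathGraph 13) G := by
  refine ⟨⟨fun i => v i.val, ?_⟩, ?_⟩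
  · intro i j hij
    exact Fin.ext (hv _ (by omega) _ (by omega) hij)
  · intro i j hij
    rw [pathGraph_adj] at hij
    rcases hij with h | h
    · have := ha i.val (by omega)
      rw [h] at this; exact this
    · have := ha j.val (by omega)
      rw [h] at this; exact this.symm

theorem extract {V : Type} (E : Set (Sym2 V)) (e : Sym2 V)
    (h : IsCopy (SimpleGraph.pathGraph 13) (fromEdgeSet (insert e E)))
    (hn : ¬ IsCopy (SimpleGraph.pathGraph 13) (fromEdgeSet E)) :
    ∃ u w p q g g', e = s(u, w) ∧ p + q = 11 ∧ BP (fromEdgeSet E) u p g ∧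
      BP (fromEdgeSet E) w q g' := by
  obtain ⟨v, hv, ha⟩ := copy_nat h
  have hex : ∃ j < 12, s(v j, v (j+1)) = e := by
    by_contra hcon
    push Not at hcon
    refine hn (nat_copy v hv fun i hi => ?_)
    have := ha i hi
    rw [fromEdgeSet_adj] at this ⊢
    exact ⟨this.1.resolve_left (hcon i hi), this.2⟩
  obtain ⟨j, hj, rfl⟩ := hex
  have ha' : ∀ i < 12, i ≠ j → (fromEdgeSet E).Adj (v i) (v (i+1)) := by
    intro i hi hij
    have := ha i hi
    rw [fromEdgeSet_adj] at this ⊢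
    refine ⟨this.1.resolve_left fun hac => hij ?_, this.2⟩
    simp only [Sym2.eq_iff] at hac
    rcases hac with ⟨h1, _⟩ | ⟨h1, h2⟩
    · exact hv _ (by omega) _ (by omega) h1
    · have := hv _ (by omega) _ (by omega) h1
      have := hv _ (by omega) _ (by omega) h2
      omega
  refine ⟨v j, v (j+1), j, 11 - j, fun t => v (j - t), fun t => v (j + 1 + t), rfl, by omega,
    ⟨rfl, ?_, ?_⟩, ⟨rfl, ?_, ?_⟩⟩
  · intro s hs t ht hst
    have := hv _ (by omega) _ (by omega) hst
    omega
  · intro t ht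
    have := ha' (j - (t+1)) (by omega) (by omega)
    rw [show j - (t+1) + 1 = j - t by omega] at this
    exact this.symm
  · intro s hs t ht hst
    have := hv _ (by omega) _ (by omega) hst
    omega
  · intro t ht
    exact ha' (j+1+t) (by omega) (by omega)

theorem BP.mono {V : Type} {B B' : SimpleGraph V} (h : B ≤ B') {x : V} {d : ℕ} {g : ℕ → V}
    (hb : BP B x d g) : BP B' x d g :=
  ⟨hb.1, hb.2.1, fun t ht => h (hb.2.2 t ht)⟩

theorem avoids (n : ℕ) :
    PainterAvoidsTree (SimpleGraph.pathGraph 13) 2 78 n (blueIfSafeStrategy 12 n) := by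
  rintro l ⟨hnd, hdiag⟩ htree ⟨c, hc⟩
  set π := blueIfSafeStrategy 12 n with hπ
  have hT := htree l.length
  rw [List.take_length] at hT
  obtain ⟨hac, hsize⟩ := hT
  have hc0 : c = 0 ∨ c = 1 := by omega
  rcases hc0 with rfl | rfl
  swap
  · exact no_blue l hc
  have hmem : ∀ c e, e ∈ (colorGraph (runPainter π l) c).edgeSet ↔ (e, c) ∈ runPainter π l := by
    intro c e
    simp only [colorGraph, edgeSet_fromEdgeSet, Set.mem_sdiff, Set.mem_ofPred_eq]
    refine ⟨fun h => h.1, fun h => ⟨h, ?_⟩⟩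
    exact hdiag e ((runPainter_mem π l e).2 ⟨c, h⟩)
  have hle : ∀ c, colorGraph (runPainter π l) c ≤ boardOf l := by
    intro c
    apply fromEdgeSet_mono
    intro e he
    exact (runPainter_mem π l e).2 ⟨c, he⟩
  have hidx : ∀ l1 e l2, l = l1 ++ e :: l2 → ∀ e', l.idxOf e' < l.idxOf e ↔ e' ∈ l1 := by
    intro l1 e l2 hl e'
    have hel : e ∉ l1 := by
      intro he
      rw [hl] at hnd
      exact (List.nodup_append.1 hnd).2.2 e he e (by simp) rfl
    have h1 : l.idxOf e = l1.length := by
      rw [hl, List.idxOf_append_of_notMem hel]; simp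
    rw [h1]
    constructor
    · intro h
      by_contra hcon
      rw [hl, List.idxOf_append_of_notMem hcon] at h
      omega
    · intro h
      rw [hl, List.idxOf_append_of_mem h]
      exact List.idxOf_lt_length_of_mem h
  obtain ⟨v, hv, ha⟩ := copy_nat hc
  suffices hcore : ∃ S : Set (Fin n), ((boardOf l).induce S).Connected ∧ 79 ≤ edgesWithin (boardOf l) S by
    obtain ⟨S, hS, h79⟩ := hcore
    have := hsize S hS
    omega
  refine core (boardOf l) (colorGraph (runPainter π l) 0) (colorGraph (runPainter π l) 1)
    (fun e => l.idxOf e) hac (hle 0) (hle 1) ?_ ?_ ?_ ?_ v hv ha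
  · intro e h1 h2
    have := runPainter_unique π l hnd ((hmem _ _).1 h1) ((hmem _ _).1 h2)
    exact absurd this (by decide)
  · intro e h1 e' h2 h
    exact (List.idxOf_inj ((runPainter_mem π l e).2 ⟨_, (hmem _ _).1 h1⟩)).1 h
  · intro e he
    obtain ⟨l1, l2, hl, h1, h2⟩ := runPainter_split π l e 1 ((hmem _ _).1 he)
    rw [hπ] at h1
    unfold blueIfSafeStrategy at h1
    split_ifs at h1 with hh
    · obtain ⟨⟨e', he', x, hx, hx'⟩, -⟩ := hh
      refine ⟨e', (hmem _ _).2 (h2 _ he'), ?_, x, hx, hx'⟩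
      exact (hidx l1 e l2 hl e').2 ((runPainter_mem π l1 e').2 ⟨_, he'⟩)
    · exact absurd h1 (by decide)
  · intro e he
    obtain ⟨l1, l2, hl, h1, h2⟩ := runPainter_split π l e 0 ((hmem _ _).1 he)
    rw [hπ] at h1
    unfold blueIfSafeStrategy at h1
    split_ifs at h1 with hh
    · exact absurd h1 (by decide)
    · rw [not_and_or, not_not] at hh
      rcases hh with hh | hh
      · left
        rintro e' he' ⟨x, hx, hx'⟩ hlt
        obtain ⟨c', hc'⟩ := (runPainter_mem π l1 e').1 ((hidx l1 e l2 hl e').1 hlt)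
        have := runPainter_unique π l hnd ((hmem _ _).1 he') (h2 _ hc')
        subst this
        exact hh ⟨e', hc', x, hx, hx'⟩
      · right
        obtain ⟨u, w, p, q, g, g', h3, h4, h5, h6⟩ := extract _ e hh (no_blue l1)
        have hm : fromEdgeSet {e' | (e', (1 : Fin 2)) ∈ runPainter π l1} ≤ colorGraph (runPainter π l) 1 := by
          apply fromEdgeSet_mono
          intro x hx
          exact h2 _ hx
        refine ⟨u, w, p, q, g, g', h3, h4, h5.mono hm, h6.mono hm, ?_, ?_⟩
        · intro t ht
          have := h5.2.2 t ht
          rw [fromEdgeSet_adj] at this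
          exact (hidx l1 e l2 hl _).2 ((runPainter_mem π l1 _).2 ⟨_, this.1⟩)
        · intro t ht
          have := h6.2.2 t ht
          rw [fromEdgeSet_adj] at this
          exact (hidx l1 e l2 hl _).2 ((runPainter_mem π l1 _).2 ⟨_, this.1⟩)

/-- Painter has a winning strategy in the deterministic `P_12`-avoidance
game with 2 colors and tree size restriction 78 — namely the strategy that colors an edge
blue iff it is adjacent to a red edge and does not complete a blue `P_12` — and consequently
every tree size restriction for which Builder wins is at least 79, i.e. `k*(P_12,2) ≥ 79`. -/
theorem statement14 :
    (∀ n : ℕ, PainterAvoidsTree (SimpleGraph.pathGraph 13) 2 78 n (blueIfSafeStrategy 12 n)) ∧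
    PainterWinsTree (SimpleGraph.pathGraph 13) 2 78 ∧
    (∀ k : ℕ, BuilderWinsTree (SimpleGraph.pathGraph 13) 2 k → 79 ≤ k) := by
  refine ⟨avoids, fun a => ⟨_, avoids a⟩, fun k hk => ?_⟩
  by_contra hlt
  obtain ⟨a, ha⟩ := hk
  obtain ⟨l, h1, h2, h3⟩ := ha (blueIfSafeStrategy 12 a)
  refine avoids a l h1 (fun i => ⟨(h2 i).1, fun S hS => ?_⟩) h3
  have := (h2 i).2 S hS
  omega
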